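/- arXiv:2207.06327 — 3 statements merged into one kernel-verified Lean document; each statement's English description precedes it below -/
import Mathlib

section
/- Let n ≥ 1, let Q be an n×n real symmetric positive definite matrix, let a < b be real numbers, and let ω : [a,b] → ℝⁿ be continuous. Then ∫_a^b ω(β)ᵀ Q ω(β) dβ ≥ (1/(b−a)) (∫_a^b ω(β) dβ)ᵀ Q (∫_a^b ω(β) dβ) + (3/(b−a)) Φᵀ Q Φ, where Φ := ∫_a^b ω(s) ds − (2/(b−a)) ∫_a^b (∫_a^s ω(r) dr) ds. -/
/-!
The vectors `(1 / (b - a)) • ∫ ω` and `(3 / (b - a)) • Φ` are the coefficients of the `L²`-projection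
of `ω` onto the affine functions of `s`, with respect to the orthogonal basis `1`,
`p s = (2 s - a - b) / (b - a)` (the first two Legendre polynomials, `∫ p = 0`,
`∫ p² = (b - a) / 3`): integration by parts (`integral_primitive_eq`) gives `Φ = ∫ p • ω`.
The inequality is Bessel's inequality for the form `Q`: integrate
`0 ≤ (ω - u)ᵀ Q (ω - u)` over `[a, b]`, where `u` is that projection.
The argument is carried out for `ω` continuous on all of `ℝ`; the general case follows by extending
`ω` by constants outside `[a, b]`.
-/

open Matrix intervalIntegral

/-- Integration by parts, in the form of the fundamental theorem of calculus for
`s ↦ (s - b) • ∫ r in a..s, ω r`, which vanishes at both endpoints. -/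
lemma integral_primitive_eq {n : ℕ} (a b : ℝ) (ω : ℝ → Fin n → ℝ) (hω : Continuous ω) :
    ∫ s in a..b, (∫ r in a..s, ω r) = ∫ s in a..b, (b - s) • ω s := by
  have hd : ∀ s, HasDerivAt (fun s => ∫ r in a..s, ω r) (ω s) s := fun s =>
    integral_hasDerivAt_right (hω.intervalIntegrable _ _)
      (hω.stronglyMeasurableAtFilter _ _) hω.continuousAt
  have hF : Continuous (fun s => ∫ r in a..s, ω r) :=
    continuous_iff_continuousAt.2 fun s => (hd s).continuousAt
  have h := integral_eq_sub_of_hasDerivAt (a := a) (b := b)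
    (f := fun s => (s - b) • ∫ r in a..s, ω r)
    (fun s _ => ((hasDerivAt_id s).sub_const b).smul (hd s))
    (Continuous.intervalIntegrable (by simp only [id]; fun_prop) _ _)
  simp only [id, one_smul, sub_self, zero_smul, integral_same, smul_zero] at h
  rw [integral_add (Continuous.intervalIntegrable (by fun_prop) _ _)
    (Continuous.intervalIntegrable (by fun_prop) _ _)] at h
  have h2 : ∫ s in a..b, (b - s) • ω s = - ∫ s in a..b, (s - b) • ω s := by
    rw [← intervalIntegral.integral_neg]
    congr 1; ext s; simp [sub_mul]
  rw [h2]
  exact add_eq_zero_iff_eq_neg'.1 h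

lemma dotProduct_integral {n : ℕ} (a b : ℝ) (v : Fin n → ℝ) (g : ℝ → Fin n → ℝ)
    (hg : Continuous g) : v ⬝ᵥ (∫ s in a..b, g s) = ∫ s in a..b, v ⬝ᵥ g s := by
  have h := (LinearMap.toContinuousLinearMap (dotProductBilin ℝ ℝ v)).intervalIntegral_comp_comm
    (hg.intervalIntegrable (μ := MeasureTheory.volume) a b)
  exact h.symm

/-- Expansion of `0 ≤ (x - u)ᵀ Q (x - u)` with `u = c • I + d • P`. -/
lemma quadForm_lower_bound {n : ℕ} (Q : Matrix (Fin n) (Fin n) ℝ) (hQsymm : Q.IsSymm)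
    (hQ : Q.PosDef) (x I P : Fin n → ℝ) (c d : ℝ) :
    2 * c * ((Q *ᵥ I) ⬝ᵥ x) + 2 * d * ((Q *ᵥ P) ⬝ᵥ x) - c ^ 2 * (I ⬝ᵥ Q *ᵥ I)
      - 2 * c * d * (I ⬝ᵥ Q *ᵥ P) - d ^ 2 * (P ⬝ᵥ Q *ᵥ P) ≤ x ⬝ᵥ Q *ᵥ x := by
  have hs : ∀ y z : Fin n → ℝ, y ⬝ᵥ Q *ᵥ z = z ⬝ᵥ Q *ᵥ y := fun y z => by
    rw [dotProduct_mulVec, ← mulVec_transpose, hQsymm.eq, dotProduct_comm]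
  have h := hQ.posSemidef.dotProduct_mulVec_nonneg (x - (c • I + d • P))
  simp only [star_trivial, mulVec_sub, mulVec_add, mulVec_smul, sub_dotProduct, dotProduct_sub,
    add_dotProduct, dotProduct_add, smul_dotProduct, dotProduct_smul, smul_eq_mul] at h
  rw [dotProduct_comm (Q *ᵥ I), dotProduct_comm (Q *ᵥ P)]
  rw [hs I x, hs P x, hs P I] at h
  linarith

lemma wirtinger_of_continuous {n : ℕ} (Q : Matrix (Fin n) (Fin n) ℝ) (hQsymm : Q.IsSymm)
    (hQ : Q.PosDef) (a b : ℝ) (hab : a < b) (ω : ℝ → Fin n → ℝ) (hω : Continuous ω) :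
    (1 / (b - a)) * ((∫ β in a..b, ω β) ⬝ᵥ (Q *ᵥ (∫ β in a..b, ω β)))
      + (3 / (b - a)) *
        ((((∫ s in a..b, ω s) - (2 / (b - a)) • ∫ s in a..b, (∫ r in a..s, ω r))) ⬝ᵥ
          (Q *ᵥ (((∫ s in a..b, ω s) - (2 / (b - a)) • ∫ s in a..b, (∫ r in a..s, ω r)))))
      ≤ ∫ β in a..b, (ω β ⬝ᵥ (Q *ᵥ ω β)) := by
  have hL : b - a ≠ 0 := (sub_pos.2 hab).ne'
  set p : ℝ → ℝ := fun s => (2 * s - a - b) / (b - a) with hp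
  have hpc : Continuous p := by fun_prop
  have hΦ : (∫ s in a..b, ω s) - (2 / (b - a)) • ∫ s in a..b, (∫ r in a..s, ω r)
      = ∫ s in a..b, p s • ω s := by
    rw [integral_primitive_eq a b ω hω, ← intervalIntegral.integral_smul, ← integral_sub
      (hω.intervalIntegrable _ _) (Continuous.intervalIntegrable (by fun_prop) _ _)]
    congr 1; ext s i
    simp only [hp, Pi.sub_apply, Pi.smul_apply, smul_eq_mul]
    field_simp
    ring
  rw [hΦ]
  set I := ∫ s in a..b, ω s with hI
  set P := ∫ s in a..b, p s • ω s with hP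
  have e1 : ∫ s in a..b, (Q *ᵥ I) ⬝ᵥ ω s = I ⬝ᵥ Q *ᵥ I := by
    rw [← dotProduct_integral a b _ ω hω, dotProduct_comm]
  have e2 : ∫ s in a..b, p s * ((Q *ᵥ P) ⬝ᵥ ω s) = P ⬝ᵥ Q *ᵥ P := by
    rw [dotProduct_comm P, hP, dotProduct_integral a b _ _ (by fun_prop), ← hP]
    simp only [dotProduct_smul, smul_eq_mul]
  have e3 : ∫ s in a..b, p s = 0 := by
    rw [integral_eq_sub_of_hasDerivAt (f := fun s => (s - a) * (s - b) / (b - a)) (f' := p)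
      (fun s _ => ?_) (hpc.intervalIntegrable _ _)]
    · simp
    · refine ((((hasDerivAt_id s).sub_const a).mul
        ((hasDerivAt_id s).sub_const b)).div_const (b - a)).congr_deriv ?_
      simp only [hp, id]; ring
  have e4 : ∫ s in a..b, p s ^ 2 = (b - a) / 3 := by
    rw [integral_eq_sub_of_hasDerivAt (f := fun s => (b - a) / 6 * (p s) ^ 3)
      (f' := fun s => p s ^ 2) (fun s _ => ?_)
      ((hpc.pow 2).intervalIntegrable _ _)]
    · simp only [hp]; field_simp; ring
    · have h : HasDerivAt p (2 / (b - a)) s := by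
        refine (((((hasDerivAt_id s).const_mul 2).sub_const a).sub_const b).div_const
          (b - a)).congr_deriv ?_
        ring
      refine ((h.pow 3).const_mul ((b - a) / 6)).congr_deriv ?_
      field_simp; norm_num; ring
  have c1 : Continuous fun s => (Q *ᵥ I) ⬝ᵥ ω s := by fun_prop
  have c2 : Continuous fun s => (Q *ᵥ P) ⬝ᵥ ω s := by fun_prop
  have c3 : Continuous fun s => ω s ⬝ᵥ Q *ᵥ ω s := by fun_prop
  -- Subtract the projection `(1 / (b - a)) • I + (3 / (b - a) * p s) • P` pointwise.
  have key := integral_mono_on (μ := MeasureTheory.volume) hab.le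
    (Continuous.intervalIntegrable (by fun_prop) a b) (c3.intervalIntegrable a b)
    (fun s _ => quadForm_lower_bound Q hQsymm hQ (ω s) I P (1 / (b - a)) (3 / (b - a) * p s))
  refine le_trans (le_of_eq ?_) key
  have e5 : ∀ s, 2 * (1 / (b - a)) * ((Q *ᵥ I) ⬝ᵥ ω s)
      + 2 * (3 / (b - a) * p s) * ((Q *ᵥ P) ⬝ᵥ ω s) - (1 / (b - a)) ^ 2 * (I ⬝ᵥ Q *ᵥ I)
      - 2 * (1 / (b - a)) * (3 / (b - a) * p s) * (I ⬝ᵥ Q *ᵥ P)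
      - (3 / (b - a) * p s) ^ 2 * (P ⬝ᵥ Q *ᵥ P)
      = 2 / (b - a) * ((Q *ᵥ I) ⬝ᵥ ω s) + 6 / (b - a) * (p s * ((Q *ᵥ P) ⬝ᵥ ω s))
        - (1 / (b - a)) ^ 2 * (I ⬝ᵥ Q *ᵥ I)
        - 6 / (b - a) ^ 2 * (I ⬝ᵥ Q *ᵥ P) * p s
        - 9 / (b - a) ^ 2 * (P ⬝ᵥ Q *ᵥ P) * p s ^ 2 := fun s => by
    field_simp
    ring
  simp only [e5]
  rw [integral_sub, integral_sub, integral_sub, integral_add, integral_const_mul,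
    integral_const_mul, integral_const_mul, integral_const_mul, integral_const_mul,
    integral_const, e1, e2, e3, e4, smul_eq_mul]
  · field_simp; ring
  all_goals exact Continuous.intervalIntegrable (by fun_prop) _ _

/-- Wirtinger-based integral inequality (Seuret–Gouaisbaut, Corollary 4). -/
theorem wirtinger_integral_inequality
    (n : ℕ) (hn : 1 ≤ n)
    (Q : Matrix (Fin n) (Fin n) ℝ) (hQsymm : Q.IsSymm) (hQ : Q.PosDef)
    (a b : ℝ) (hab : a < b)
    (ω : ℝ → Fin n → ℝ) (hω : ContinuousOn ω (Set.Icc a b)) :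
    (1 / (b - a)) * ((∫ β in a..b, ω β) ⬝ᵥ (Q *ᵥ (∫ β in a..b, ω β)))
      + (3 / (b - a)) *
        ((((∫ s in a..b, ω s) - (2 / (b - a)) • ∫ s in a..b, (∫ r in a..s, ω r))) ⬝ᵥ
          (Q *ᵥ (((∫ s in a..b, ω s) - (2 / (b - a)) • ∫ s in a..b, (∫ r in a..s, ω r)))))
      ≤ ∫ β in a..b, (ω β ⬝ᵥ (Q *ᵥ ω β)) := by
  set η : ℝ → Fin n → ℝ := Set.IccExtend hab.le ((Set.Icc a b).domRestrict ω) with hη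
  have hηc : Continuous η := (continuousOn_iff_continuous_domRestrict.1 hω).Icc_extend'
  have heq : ∀ s ∈ Set.Icc a b, η s = ω s := fun s hs => by
    rw [hη, Set.IccExtend_of_mem _ _ hs]; rfl
  have hint : ∀ s ∈ Set.Icc a b, ∫ r in a..s, η r = ∫ r in a..s, ω r := fun s hs =>
    integral_congr fun r hr => by
      rw [Set.uIcc_of_le hs.1] at hr
      exact heq r ⟨hr.1, hr.2.trans hs.2⟩
  have h1 := hint b ⟨hab.le, le_rfl⟩
  have h2 : ∫ s in a..b, (∫ r in a..s, η r) = ∫ s in a..b, (∫ r in a..s, ω r) :=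
    integral_congr fun s hs => hint s (by rwa [Set.uIcc_of_le hab.le] at hs)
  have h3 : ∫ s in a..b, (η s ⬝ᵥ Q *ᵥ η s) = ∫ s in a..b, (ω s ⬝ᵥ Q *ᵥ ω s) :=
    integral_congr fun s hs => by
      rw [Set.uIcc_of_le hab.le] at hs
      simp only [heq s hs]
  have h := wirtinger_of_continuous Q hQsymm hQ a b hab η hηc
  rwa [h1, h2, h3] at h
end

section
/- Let Q be an n×n real symmetric positive definite matrix, let f : ℝ → ℝⁿ be continuously differentiable, let t ∈ ℝ, and let 0 < δ ≤ δ_M. Then −δ_M ∫_{t−δ_M}^{t} f'(s)ᵀ Q f'(s) ds ≤ −v₁ᵀ Q v₁ − 3 v₂ᵀ Q v₂, where v₁ := f(t) − f(t−δ) and v₂ := f(t) + f(t−δ) − (2/δ) ∫_{t−δ}^{t} f(s) ds. -/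
open Matrix intervalIntegral

/-!
Wirtinger's inequality is a Bessel inequality on `[t - δ, t]`. With
`g s = (2 / δ) (s - (t - δ)) - 1`, the constant `1` and `g` are orthogonal in `L²(t - δ, t)`,
with squared norms `δ` and `δ / 3`; moreover `∫ f' = v₁` and, integrating by parts, `∫ g f' = v₂`.
So `p s = δ⁻¹ v₁ + (3 / δ) g(s) v₂` is the projection of `f'` onto the affine functions.

Pointwise, `(f' - p)ᵀ Q (f' - p) ≥ 0` gives `2 f'ᵀ Q p - pᵀ Q p ≤ f'ᵀ Q f'`. The left side has an
explicit primitive, in terms of `f`, `∫ f` and powers of `g`, so integrating it produces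
`δ⁻¹ (v₁ᵀ Q v₁ + 3 v₂ᵀ Q v₂)`. Enlarging the interval to `[t - δM, t]` and the factor `δ` to `δM`
only increases the product of the two, by nonnegativity of the integrand.
-/

theorem hasDerivAt_dotProduct_const {n : ℕ} {f : ℝ → Fin n → ℝ} {f' : Fin n → ℝ} {s : ℝ}
    (h : HasDerivAt f f' s) (c : Fin n → ℝ) :
    HasDerivAt (fun x => f x ⬝ᵥ c) (f' ⬝ᵥ c) s := by
  simp only [dotProduct]
  exact HasDerivAt.fun_sum fun i _ => (hasDerivAt_pi.1 h i).mul_const (c i)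

theorem dotProduct_mulVec_swap {n : ℕ} {Q : Matrix (Fin n) (Fin n) ℝ} (hQ : Q.IsSymm)
    (x y : Fin n → ℝ) : x ⬝ᵥ (Q *ᵥ y) = y ⬝ᵥ (Q *ᵥ x) := by
  rw [dotProduct_mulVec, ← mulVec_transpose, hQ.eq, dotProduct_comm]

/-- The tangent-line bound for the convex quadratic form of `Q`, at the point `a • v + b • w`. -/
theorem quadForm_tangent_le {n : ℕ} {Q : Matrix (Fin n) (Fin n) ℝ} (hQsymm : Q.IsSymm)
    (hQ : Q.PosSemidef) (x v w : Fin n → ℝ) (a b : ℝ) :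
    2 * (a * (x ⬝ᵥ (Q *ᵥ v)) + b * (x ⬝ᵥ (Q *ᵥ w)))
      - (a ^ 2 * (v ⬝ᵥ (Q *ᵥ v)) + 2 * (a * b) * (v ⬝ᵥ (Q *ᵥ w)) + b ^ 2 * (w ⬝ᵥ (Q *ᵥ w)))
      ≤ x ⬝ᵥ (Q *ᵥ x) := by
  have h := hQ.dotProduct_mulVec_nonneg (x - (a • v + b • w))
  simp only [star_trivial, mulVec_sub, mulVec_add, mulVec_smul, dotProduct_sub, sub_dotProduct,
    dotProduct_add, add_dotProduct, dotProduct_smul, smul_dotProduct, smul_eq_mul] at h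
  rw [dotProduct_mulVec_swap hQsymm v x, dotProduct_mulVec_swap hQsymm w x,
    dotProduct_mulVec_swap hQsymm w v] at h
  linarith

/-- The Wirtinger-based bound on the interval `[t - δ, t]` itself. -/
theorem wirtinger_bound_self {n : ℕ} {Q : Matrix (Fin n) (Fin n) ℝ} (hQsymm : Q.IsSymm)
    (hQ : Q.PosSemidef) {f : ℝ → Fin n → ℝ} (hf : ContDiff ℝ 1 f) {t δ : ℝ} (hδ : 0 < δ)
    {v w : Fin n → ℝ} (hv : v = f t - f (t - δ))
    (hw : w = f t + f (t - δ) - (2 / δ) • ∫ s in (t - δ)..t, f s) :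
    v ⬝ᵥ (Q *ᵥ v) + 3 * (w ⬝ᵥ (Q *ᵥ w))
      ≤ δ * ∫ s in (t - δ)..t, (deriv f s) ⬝ᵥ (Q *ᵥ deriv f s) := by
  have hd (s : ℝ) : HasDerivAt f (deriv f s) s :=
    (hf.differentiable one_ne_zero s).hasDerivAt
  have hc : Continuous (deriv f) := hf.continuous_deriv le_rfl
  have hF (s : ℝ) : HasDerivAt (fun x => ∫ r in (t - δ)..x, f r) (f s) s :=
    hf.continuous.integral_hasStrictDerivAt _ _ |>.hasDerivAt
  set g : ℝ → ℝ := fun s => (2 / δ) * (s - (t - δ)) - 1 with hg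
  have hgd (s : ℝ) : HasDerivAt g (2 / δ) s := by
    exact ((((hasDerivAt_id s).sub_const (t - δ)).const_mul (2 / δ)).sub_const 1).congr_deriv
      (mul_one _)
  have hgc : Continuous g := by fun_prop
  have hg1 : g t = 1 := by simp only [hg]; field_simp; ring
  have hg0 : g (t - δ) = -1 := by simp [hg]
  set q : ℝ → ℝ := fun s =>
    2 * ((1 / δ) * (deriv f s ⬝ᵥ (Q *ᵥ v)) + (3 / δ * g s) * (deriv f s ⬝ᵥ (Q *ᵥ w)))
      - ((1 / δ) ^ 2 * (v ⬝ᵥ (Q *ᵥ v)) + 2 * ((1 / δ) * (3 / δ * g s)) * (v ⬝ᵥ (Q *ᵥ w))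
        + (3 / δ * g s) ^ 2 * (w ⬝ᵥ (Q *ᵥ w))) with hq
  have hqc : Continuous q := by fun_prop
  -- The explicit primitive of `q`; the term in `∫ f` comes from integrating `g f'` by parts.
  have hprim (s : ℝ) : HasDerivAt (fun x =>
      2 * ((1 / δ) * (f x ⬝ᵥ (Q *ᵥ v)) + (3 / δ) * (g x * (f x ⬝ᵥ (Q *ᵥ w))
          - (2 / δ) * ((∫ r in (t - δ)..x, f r) ⬝ᵥ (Q *ᵥ w))))
        - ((1 / δ) ^ 2 * (v ⬝ᵥ (Q *ᵥ v)) * x + (3 / (2 * δ)) * (v ⬝ᵥ (Q *ᵥ w)) * g x ^ 2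
          + (3 / (2 * δ)) * (w ⬝ᵥ (Q *ᵥ w)) * g x ^ 3)) (q s) s := by
    have h1 := hasDerivAt_dotProduct_const (hd s) (Q *ᵥ v)
    have h2 := hasDerivAt_dotProduct_const (hd s) (Q *ᵥ w)
    have h3 := hasDerivAt_dotProduct_const (hF s) (Q *ᵥ w)
    have h4 := (((h1.const_mul (1 / δ)).add
      ((((hgd s).mul h2).sub (h3.const_mul (2 / δ))).const_mul (3 / δ))).const_mul 2).sub
      ((((hasDerivAt_id s).const_mul ((1 / δ) ^ 2 * (v ⬝ᵥ (Q *ᵥ v)))).add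
        (((hgd s).pow 2).const_mul ((3 / (2 * δ)) * (v ⬝ᵥ (Q *ᵥ w))))).add
        (((hgd s).pow 3).const_mul ((3 / (2 * δ)) * (w ⬝ᵥ (Q *ᵥ w)))))
    refine h4.congr_deriv ?_
    simp only [hq]
    push_cast
    field_simp
    ring
  have hint := integral_eq_sub_of_hasDerivAt (fun s _ => hprim s)
    (hqc.intervalIntegrable (t - δ) t)
  have hmono : ∫ s in (t - δ)..t, q s
      ≤ ∫ s in (t - δ)..t, (deriv f s) ⬝ᵥ (Q *ᵥ deriv f s) := by
    refine integral_mono_on (by linarith) (hqc.intervalIntegrable _ _)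
      (Continuous.intervalIntegrable (by fun_prop) _ _) fun s _ => ?_
    exact quadForm_tangent_le hQsymm hQ _ _ _ _ _
  have ev : v ⬝ᵥ (Q *ᵥ v) = f t ⬝ᵥ (Q *ᵥ v) - f (t - δ) ⬝ᵥ (Q *ᵥ v) := by
    rw [← sub_dotProduct, ← hv]
  have ew : w ⬝ᵥ (Q *ᵥ w) = f t ⬝ᵥ (Q *ᵥ w) + f (t - δ) ⬝ᵥ (Q *ᵥ w)
      - (2 / δ) * ((∫ r in (t - δ)..t, f r) ⬝ᵥ (Q *ᵥ w)) := by
    rw [← smul_eq_mul, ← smul_dotProduct, ← add_dotProduct, ← sub_dotProduct, ← hw]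
  have hval : δ * ∫ s in (t - δ)..t, q s = v ⬝ᵥ (Q *ᵥ v) + 3 * (w ⬝ᵥ (Q *ᵥ w)) := by
    rw [hint, hg1, hg0, integral_same, zero_dotProduct]
    have e1 : f t ⬝ᵥ (Q *ᵥ v) = v ⬝ᵥ (Q *ᵥ v) + f (t - δ) ⬝ᵥ (Q *ᵥ v) := by linarith
    have e2 : f t ⬝ᵥ (Q *ᵥ w) = w ⬝ᵥ (Q *ᵥ w) - f (t - δ) ⬝ᵥ (Q *ᵥ w)
      + (2 / δ) * ((∫ r in (t - δ)..t, f r) ⬝ᵥ (Q *ᵥ w)) := by linarith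
    rw [e1, e2]
    field_simp
    ring
  rw [← hval]
  exact mul_le_mul_of_nonneg_left hmono hδ.le

/-- Wirtinger-based bound on the integral term of the Lyapunov–Krasovskii derivative
(equation (17) of the paper). -/
theorem wirtinger_bound_LK
    (n : ℕ)
    (Q : Matrix (Fin n) (Fin n) ℝ) (hQsymm : Q.IsSymm) (hQ : Q.PosDef)
    (f : ℝ → Fin n → ℝ) (hf : ContDiff ℝ 1 f)
    (t δ δM : ℝ) (hδ : 0 < δ) (hδδM : δ ≤ δM) :
    -δM * ∫ s in (t - δM)..t, (deriv f s) ⬝ᵥ (Q *ᵥ deriv f s)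
      ≤ -((f t - f (t - δ)) ⬝ᵥ (Q *ᵥ (f t - f (t - δ))))
        - 3 * ((f t + f (t - δ) - (2 / δ) • ∫ s in (t - δ)..t, f s) ⬝ᵥ
            (Q *ᵥ (f t + f (t - δ) - (2 / δ) • ∫ s in (t - δ)..t, f s))) := by
  have hself := wirtinger_bound_self hQsymm hQ.posSemidef hf (t := t) hδ rfl rfl
  have hc : Continuous (deriv f) := hf.continuous_deriv le_rfl
  have hnn (s : ℝ) : 0 ≤ deriv f s ⬝ᵥ (Q *ᵥ deriv f s) := by
    simpa using hQ.posSemidef.dotProduct_mulVec_nonneg (deriv f s)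
  have hqc : Continuous fun s => deriv f s ⬝ᵥ (Q *ᵥ deriv f s) := by fun_prop
  have hsub : ∫ s in (t - δ)..t, deriv f s ⬝ᵥ (Q *ᵥ deriv f s)
      ≤ ∫ s in (t - δM)..t, deriv f s ⬝ᵥ (Q *ᵥ deriv f s) :=
    integral_mono_interval (by linarith) (by linarith) le_rfl
      (Filter.Eventually.of_forall hnn) (hqc.intervalIntegrable _ _)
  have hmul := mul_le_mul hδδM hsub (integral_nonneg (by linarith) fun s _ => hnn s)
    (hδ.le.trans hδδM)
  linarith
end

section
/- Let M, P ∈ ℝ^{n×n} be symmetric with M positive definite, let A, A_d ∈ ℝ^{n×n}, A_e ∈ ℝ^{n×m}, 𝒢 ∈ ℝ^{m×n} be constant matrices, Q ∈ ℝ^{n×n} symmetric positive definite, Ω ∈ ℝ^{m×m} symmetric positive definite, σ ≥ 0, δ_M > 0. Let ξ : ℝ → ℝⁿ be continuously differentiable, e : ℝ → ℝᵐ, fix t ∈ ℝ and δ ∈ (0, δ_M], write e_d := e(t−δ), and suppose: (i) ξ̇(t) = AMξ(t) + A_dMξ(t−δ) + A_e e_d, and (ii) e_dᵀΩe_d ≤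 σ (𝒢Mξ(t−δ))ᵀΩ(𝒢Mξ(t−δ)). Define V(s) := ½ξ(s)ᵀMξ(s) + (Mξ(s))ᵀP(Mξ(s)) + δ_M ∫_{−δ_M}^{0} ∫_{s+r}^{s} (Mξ̇(u))ᵀQ(Mξ̇(u)) du dr. Then V is differentiable at t and V̇(t) ≤ ψᵀΞ_lψ, where ψ := (Mξ(t), Mξ(t−δ), (1/δ)∫_{t−δ}^{t} Mξ(s) ds, e_d) and Ξ_l is the symmetric block matrix with blocks (Ξ_l)₁₁ = ½(A+Aᵀ) + AᵀMP + PMA + δ_M² AᵀMQMA − 4Q, (Ξ_l)₂₁ = A_dᵀMP + ½A_dᵀ + δ_M² A_dᵀMQMA − 2Q, (Ξ_l)₂₂ = δ_M² A_dᵀMQMA_d − 4Q + σ𝒢ᵀΩ𝒢, (Ξ_l)₃₁ = (Ξ_l)₃₂ = 6Q, (Ξ_l)₃₃ = −12Q, (Ξ_l)₄₁ = A_eᵀMP + ½A_eᵀ + δ_M² A_eᵀMQMA, (Ξ_l)₄₂ = δ_M² A_eᵀMQMA_d, (Ξ_l)₄₃ = 0, (Ξ_l)₄₄ = δ_M² A_eᵀMQMA_e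 − Ω. -/
/-!
Along a trajectory write `x = Mξ`, `y = x(t - δ)`, `w = (1/δ) ∫_{t-δ}^{t} x`, and let `d` be the
right-hand side of the dynamics. The first two terms of `V` contribute `x ⬝ d + 2 (Md) ⬝ P x`.
With `f = ẋ ⬝ Q ẋ`, the double integral contributes `δM² f(t) - δM ∫_{t-δM}^{t} f`
(`LK.hasDerivAt_double_integral`), and the last integral can be shortened to `[t-δ, t]` because
`f ≥ 0` and `δ ≤ δM`. The Wirtinger-based inequality (`LK.wirtinger`) then gives
`δ ∫_{t-δ}^{t} f ≥ (x-y) ⬝ Q (x-y) + 3 (x+y-2w) ⬝ Q (x+y-2w)`. Adding the nonnegative slack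
`σ (Gy) ⬝ Ω (Gy) - e ⬝ Ω e` of the event-triggering condition yields exactly the quadratic form of
`Ξ_l` (`LK.quadForm_eq`).
-/

open Matrix intervalIntegral

namespace LK

lemma dot_transpose {k l : ℕ} (N : Matrix (Fin k) (Fin l) ℝ) (v : Fin l → ℝ) (w : Fin k → ℝ) :
    v ⬝ᵥ (Nᵀ *ᵥ w) = (N *ᵥ v) ⬝ᵥ w := by
  rw [Matrix.dotProduct_mulVec, Matrix.vecMul_transpose]

lemma dot_symm {k : ℕ} {N : Matrix (Fin k) (Fin k) ℝ} (hN : N.IsSymm) (v w : Fin k → ℝ) :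
    v ⬝ᵥ (N *ᵥ w) = w ⬝ᵥ (N *ᵥ v) := by
  conv_lhs => rw [← hN.eq, dot_transpose, dotProduct_comm]

lemma quad_nonneg {k : ℕ} {N : Matrix (Fin k) (Fin k) ℝ} (hN : N.PosDef) (v : Fin k → ℝ) :
    0 ≤ v ⬝ᵥ (N *ᵥ v) := by
  simpa using hN.posSemidef.dotProduct_mulVec_nonneg v

lemma hasDerivAt_dot {k : ℕ} {f g : ℝ → Fin k → ℝ} {f' g' : Fin k → ℝ} {t : ℝ}
    (hf : HasDerivAt f f' t) (hg : HasDerivAt g g' t) :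
    HasDerivAt (fun s => f s ⬝ᵥ g s) (f' ⬝ᵥ g t + f t ⬝ᵥ g') t := by
  simp only [dotProduct, ← Finset.sum_add_distrib]
  exact HasDerivAt.fun_sum fun i _ => ((hasDerivAt_pi.1 hf) i).mul ((hasDerivAt_pi.1 hg) i)

lemma hasDerivAt_mulVec {k l : ℕ} (N : Matrix (Fin k) (Fin l) ℝ) {f : ℝ → Fin l → ℝ}
    {f' : Fin l → ℝ} {t : ℝ} (hf : HasDerivAt f f' t) :
    HasDerivAt (fun s => N *ᵥ f s) (N *ᵥ f') t :=
  (Matrix.mulVecLin N).toContinuousLinearMap.hasFDerivAt.comp_hasDerivAt t hf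

lemma integral_dot {k : ℕ} {x : ℝ → Fin k → ℝ} (hx : Continuous x) (v : Fin k → ℝ) (a b : ℝ) :
    ∫ u in a..b, x u ⬝ᵥ v = (∫ u in a..b, x u) ⬝ᵥ v := by
  let L : (Fin k → ℝ) →L[ℝ] ℝ :=
    LinearMap.toContinuousLinearMap
      { toFun := fun z => z ⬝ᵥ v
        map_add' := fun z z' => add_dotProduct z z' v
        map_smul' := fun c z => smul_dotProduct c z v }
  exact L.intervalIntegral_comp_comm (hx.intervalIntegrable a b)

/-- Leibniz rule for the double integral. With a primitive `F` of `f` the function is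
`h F(s) - ∫_{s-h}^{s} F`, so that no differentiation under the integral sign is needed. -/
lemma hasDerivAt_double_integral {f : ℝ → ℝ} (hf : Continuous f) (h t : ℝ) :
    HasDerivAt (fun s => ∫ r in (-h)..(0:ℝ), ∫ u in (s + r)..s, f u)
      (h * f t - ∫ u in (t - h)..t, f u) t := by
  set F : ℝ → ℝ := fun s => ∫ u in (0:ℝ)..s, f u with hF
  have hFd : ∀ s, HasDerivAt F (f s) s := fun s => hf.integral_hasStrictDerivAt 0 s |>.hasDerivAt
  have hFc : Continuous F := continuous_iff_continuousAt.2 fun s => (hFd s).continuousAt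
  have hsub : ∀ a b, ∫ u in a..b, f u = F b - F a := fun a b =>
    (integral_interval_sub_left (hf.intervalIntegrable _ _) (hf.intervalIntegrable _ _)).symm
  set H : ℝ → ℝ := fun s => ∫ u in (0:ℝ)..s, F u with hH
  have hHd : ∀ s, HasDerivAt H (F s) s := fun s => hFc.integral_hasStrictDerivAt 0 s |>.hasDerivAt
  have hEq : (fun s => ∫ r in (-h)..(0:ℝ), ∫ u in (s + r)..s, f u)
      = fun s => h * F s - (H s - H (s - h)) := by
    funext s
    simp only [hsub]
    rw [integral_sub (by simp) ((by fun_prop : Continuous fun r => F (s + r)).intervalIntegrable _ _),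
      integral_const, integral_comp_add_left (fun r => F r) s]
    rw [show H s - H (s - h) = ∫ u in (s - h)..s, F u from
      integral_interval_sub_left (hFc.intervalIntegrable _ _) (hFc.intervalIntegrable _ _)]
    simp [sub_eq_add_neg]
  rw [hEq, hsub]
  have h1 : HasDerivAt (fun s => H (s - h)) (F (t - h)) t := (hHd (t - h)).comp_sub_const t h
  exact ((hFd t).const_mul h).sub ((hHd t).sub h1)

/-- Wirtinger-based (Bessel-type) integral inequality. It expresses that the squared `Q`-norm of
`x'` on `[t-δ, t]` dominates that of its projection onto the affine functions
`u ↦ a + (u - (t - δ/2)) b`. -/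
lemma wirtinger {k : ℕ} {Q : Matrix (Fin k) (Fin k) ℝ} (hQs : Q.IsSymm) (hQ : Q.PosDef)
    {x x' : ℝ → Fin k → ℝ} (hx : ∀ u, HasDerivAt x (x' u) u) (hx' : Continuous x')
    {t δ : ℝ} (hδ : 0 < δ) {p q w : Fin k → ℝ} (hw : w = (1 / δ) • ∫ s in (t - δ)..t, x s)
    (hp : p = x t - x (t - δ)) (hq : q = x t + x (t - δ) - (2 : ℝ) • w) :
    p ⬝ᵥ (Q *ᵥ p) + 3 * (q ⬝ᵥ (Q *ᵥ q)) ≤ δ * ∫ u in (t - δ)..t, x' u ⬝ᵥ (Q *ᵥ x' u) := by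
  have hxc : Continuous x := continuous_iff_continuousAt.2 fun s => (hx s).continuousAt
  have cont : Continuous fun u => x' u ⬝ᵥ (Q *ᵥ x' u) :=
    hx'.dotProduct (continuous_const.matrix_mulVec hx')
  set c := t - δ / 2 with hc
  set I := ∫ s in (t - δ)..t, x s with hI
  have hIw : I = δ • w := by rw [hw, smul_smul]; field_simp; simp
  -- The zeroth and first moments of `x'` about the midpoint, paired with a fixed vector.
  have i1 : ∀ v : Fin k → ℝ, ∫ u in (t - δ)..t, x' u ⬝ᵥ v = p ⬝ᵥ v := by
    intro v
    rw [integral_dot hx', integral_eq_sub_of_hasDerivAt (fun u _ => hx u)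
      (hx'.intervalIntegrable _ _), hp]
  have i2 : ∀ v : Fin k → ℝ, ∫ u in (t - δ)..t, (u - c) * (x' u ⬝ᵥ v) = δ / 2 * (q ⬝ᵥ v) := by
    intro v
    have hd : ∀ u, HasDerivAt (fun u => x u ⬝ᵥ v) (x' u ⬝ᵥ v) u := fun u => by
      simpa using hasDerivAt_dot (hx u) (hasDerivAt_const u v)
    rw [integral_mul_deriv_eq_deriv_mul (u := fun u => u - c) (u' := fun _ => 1)
      (v := fun u => x u ⬝ᵥ v) (fun u _ => (hasDerivAt_id u).sub_const c) (fun u _ => hd u)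
      (by simp) ((hx'.dotProduct continuous_const).intervalIntegrable _ _)]
    simp only [one_mul]
    rw [integral_dot hxc, ← hI, hIw, hq]
    simp only [sub_dotProduct, add_dotProduct, smul_dotProduct, smul_eq_mul, hc]
    ring
  have j0 : ∫ u in (t - δ)..t, (1 : ℝ) = δ := by simp
  have j1 : ∫ u in (t - δ)..t, (u - c) = 0 := by
    rw [integral_comp_sub_right (fun u => u) c, integral_id, hc]; ring
  have j2 : ∫ u in (t - δ)..t, (u - c) ^ 2 = δ ^ 3 / 12 := by
    rw [integral_comp_sub_right (fun u => u ^ 2) c, integral_pow, hc]; push_cast; ring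
  -- Coefficients of the projection: `a = p / δ` and `b = (δ/2) q / (δ³/12)`.
  set a : Fin k → ℝ := (1 / δ) • p with ha
  set b : Fin k → ℝ := (6 / δ ^ 2) • q with hb
  have key : ∀ u, (x' u - a - (u - c) • b) ⬝ᵥ (Q *ᵥ (x' u - a - (u - c) • b)) =
      x' u ⬝ᵥ (Q *ᵥ x' u) - 2 * (x' u ⬝ᵥ (Q *ᵥ a)) - 2 * ((u - c) * (x' u ⬝ᵥ (Q *ᵥ b)))
       + (a ⬝ᵥ (Q *ᵥ a)) * 1 + (2 * (a ⬝ᵥ (Q *ᵥ b))) * (u - c)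
       + (b ⬝ᵥ (Q *ᵥ b)) * (u - c) ^ 2 := by
    intro u
    simp only [mulVec_sub, mulVec_smul, sub_dotProduct, dotProduct_sub, smul_dotProduct,
      dotProduct_smul, smul_eq_mul]
    rw [dot_symm hQs a (x' u), dot_symm hQs b (x' u), dot_symm hQs b a]
    ring
  have hnn : 0 ≤ ∫ u in (t - δ)..t,
      (x' u - a - (u - c) • b) ⬝ᵥ (Q *ᵥ (x' u - a - (u - c) • b)) :=
    integral_nonneg (by linarith) fun u _ => quad_nonneg hQ _
  have c1 : ∀ v : Fin k → ℝ, Continuous fun u => x' u ⬝ᵥ v := fun v =>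
    hx'.dotProduct continuous_const
  have c2 := c1 (Q *ᵥ a)
  have c3 := c1 (Q *ᵥ b)
  simp only [key] at hnn
  rw [integral_add, integral_add, integral_add, integral_sub, integral_sub] at hnn
  rotate_left
  all_goals try exact Continuous.intervalIntegrable (by fun_prop) _ _
  simp only [integral_const_mul, i1, i2, j0, j1, j2] at hnn
  simp only [ha, hb, mulVec_smul, smul_dotProduct, dotProduct_smul, smul_eq_mul] at hnn
  have := mul_nonneg hδ.le hnn
  rw [← sub_nonneg]
  refine this.trans_eq ?_
  field_simp
  ring

/-- The quadratic form of `Ξ_l`, with the dynamics `d = A x + Ad y + Ae e` collected. -/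
lemma quadForm_eq {n m : ℕ} {M P Q : Matrix (Fin n) (Fin n) ℝ} (hM : M.IsSymm) (hP : P.IsSymm)
    (hQ : Q.IsSymm) (A Ad : Matrix (Fin n) (Fin n) ℝ) (Ae : Matrix (Fin n) (Fin m) ℝ)
    (G : Matrix (Fin m) (Fin n) ℝ) (Ω : Matrix (Fin m) (Fin m) ℝ) (σ h : ℝ)
    (x y w d : Fin n → ℝ) (e : Fin m → ℝ) (hd : d = A *ᵥ x + Ad *ᵥ y + Ae *ᵥ e) :
    let Ξ21 : Matrix (Fin n) (Fin n) ℝ :=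
      Adᵀ * M * P + (1/2 : ℝ) • Adᵀ + (h ^ 2) • (Adᵀ * M * Q * M * A) - (2 : ℝ) • Q
    let Ξ41 : Matrix (Fin m) (Fin n) ℝ :=
      Aeᵀ * M * P + (1/2 : ℝ) • Aeᵀ + (h ^ 2) • (Aeᵀ * M * Q * M * A)
    let Ξ42 : Matrix (Fin m) (Fin n) ℝ := (h ^ 2) • (Aeᵀ * M * Q * M * Ad)
    let ψ : ((Fin n ⊕ Fin n) ⊕ (Fin n ⊕ Fin m)) → ℝ := Sum.elim (Sum.elim x y) (Sum.elim w e)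
    ψ ⬝ᵥ (Matrix.fromBlocks
        (Matrix.fromBlocks
          ((1/2 : ℝ) • (A + Aᵀ) + Aᵀ * M * P + P * M * A
            + (h ^ 2) • (Aᵀ * M * Q * M * A) - (4 : ℝ) • Q) Ξ21ᵀ Ξ21
          ((h ^ 2) • (Adᵀ * M * Q * M * Ad) - (4 : ℝ) • Q + σ • (Gᵀ * Ω * G)))
        (Matrix.fromBlocks ((6 : ℝ) • Q)ᵀ Ξ41ᵀ ((6 : ℝ) • Q)ᵀ Ξ42ᵀ)
        (Matrix.fromBlocks ((6 : ℝ) • Q) ((6 : ℝ) • Q) Ξ41 Ξ42)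
        (Matrix.fromBlocks ((-12 : ℝ) • Q) (0 : Matrix (Fin m) (Fin n) ℝ)ᵀ 0
          ((h ^ 2) • (Aeᵀ * M * Q * M * Ae) - Ω)) *ᵥ ψ) =
      x ⬝ᵥ d + 2 * ((M *ᵥ d) ⬝ᵥ (P *ᵥ x)) + h ^ 2 * ((M *ᵥ d) ⬝ᵥ (Q *ᵥ (M *ᵥ d)))
        - ((x - y) ⬝ᵥ (Q *ᵥ (x - y))
          + 3 * ((x + y - (2 : ℝ) • w) ⬝ᵥ (Q *ᵥ (x + y - (2 : ℝ) • w))))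
        + (σ * ((G *ᵥ y) ⬝ᵥ (Ω *ᵥ (G *ᵥ y))) - e ⬝ᵥ (Ω *ᵥ e)) := by
  intro Ξ21 Ξ41 Ξ42 ψ
  have dM : ∀ v z, v ⬝ᵥ (M *ᵥ z) = (M *ᵥ v) ⬝ᵥ z := fun v z => by
    conv_lhs => rw [← hM.eq, dot_transpose]
  have e1 : x ⬝ᵥ (P *ᵥ (M *ᵥ (A *ᵥ x))) = (M *ᵥ (A *ᵥ x)) ⬝ᵥ (P *ᵥ x) := dot_symm hP _ _
  simp only [ψ, Matrix.fromBlocks_mulVec, Sum.elim_comp_inl, Sum.elim_comp_inr,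
    sumElim_dotProduct_sumElim, dotProduct_add, dot_transpose, transpose_zero, zero_mulVec,
    dotProduct_zero]
  -- Every off-diagonal block now pairs the same two vectors, up to the order of the factors.
  rw [dotProduct_comm (Ξ21 *ᵥ x) y, dotProduct_comm (Ξ41 *ᵥ x) e, dotProduct_comm (Ξ42 *ᵥ y) e,
    dotProduct_comm (((6 : ℝ) • Q) *ᵥ x) w, dotProduct_comm (((6 : ℝ) • Q) *ᵥ y) w]
  simp only [Ξ21, Ξ41, Ξ42, hd, add_mulVec, sub_mulVec, smul_mulVec, mulVec_add, mulVec_sub,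
    mulVec_smul, ← mulVec_mulVec, dotProduct_add, dotProduct_sub, dotProduct_smul, add_dotProduct,
    sub_dotProduct, smul_dotProduct, dot_transpose, smul_eq_mul, e1, dM]
  rw [dot_symm hQ w x, dot_symm hQ w y, dot_symm hQ y x,
    dot_symm hQ (M *ᵥ (Ad *ᵥ y)) (M *ᵥ (A *ᵥ x)), dot_symm hQ (M *ᵥ (Ae *ᵥ e)) (M *ᵥ (A *ᵥ x)),
    dot_symm hQ (M *ᵥ (Ae *ᵥ e)) (M *ᵥ (Ad *ᵥ y)),
    dotProduct_comm (A *ᵥ x) x, dotProduct_comm (Ad *ᵥ y) x, dotProduct_comm (Ae *ᵥ e) x]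
  ring

end LK

/-- Core estimate of the Corollary for interconnected linear port-Hamiltonian systems:
for the quadratic Hamiltonian `ℋ(ξ) = ½ξᵀMξ`, the Lyapunov–Krasovskii derivative along
the linear delayed dynamics, under the event-triggering bound, satisfies
`V̇(t) ≤ ψᵀ Ξ_l ψ`. -/
theorem LK_derivative_bound_linear
    (n m : ℕ)
    (M : Matrix (Fin n) (Fin n) ℝ) (hMsymm : M.IsSymm) (hM : M.PosDef)
    (A Ad : Matrix (Fin n) (Fin n) ℝ) (Ae : Matrix (Fin n) (Fin m) ℝ)
    (G : Matrix (Fin m) (Fin n) ℝ)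
    (P : Matrix (Fin n) (Fin n) ℝ) (hP : P.IsSymm)
    (Q : Matrix (Fin n) (Fin n) ℝ) (hQsymm : Q.IsSymm) (hQ : Q.PosDef)
    (Ω : Matrix (Fin m) (Fin m) ℝ) (hΩsymm : Ω.IsSymm) (hΩ : Ω.PosDef)
    (σ δM : ℝ) (hσ : 0 ≤ σ) (hδM : 0 < δM)
    (ξ : ℝ → Fin n → ℝ) (hξ : ContDiff ℝ 1 ξ)
    (e : ℝ → Fin m → ℝ)
    (t δ : ℝ) (hδ : 0 < δ) (hδδM : δ ≤ δM)
    (hdyn : HasDerivAt ξ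
      (A *ᵥ (M *ᵥ ξ t) + Ad *ᵥ (M *ᵥ ξ (t - δ)) + Ae *ᵥ e (t - δ)) t)
    (hetm : e (t - δ) ⬝ᵥ (Ω *ᵥ e (t - δ)) ≤
      σ * ((G *ᵥ (M *ᵥ ξ (t - δ))) ⬝ᵥ (Ω *ᵥ (G *ᵥ (M *ᵥ ξ (t - δ)))))) :
    let V : ℝ → ℝ := fun s =>
      (1/2 : ℝ) * (ξ s ⬝ᵥ (M *ᵥ ξ s)) + (M *ᵥ ξ s) ⬝ᵥ (P *ᵥ (M *ᵥ ξ s))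
        + δM * ∫ r in (-δM)..(0:ℝ), (∫ u in (s + r)..s,
            (M *ᵥ deriv ξ u) ⬝ᵥ (Q *ᵥ (M *ᵥ deriv ξ u)))
    let ψ : ((Fin n ⊕ Fin n) ⊕ (Fin n ⊕ Fin m)) → ℝ :=
      Sum.elim (Sum.elim (M *ᵥ ξ t) (M *ᵥ ξ (t - δ)))
        (Sum.elim ((1 / δ) • ∫ s in (t - δ)..t, M *ᵥ ξ s) (e (t - δ)))
    let Ξ11 : Matrix (Fin n) (Fin n) ℝ :=
      (1/2 : ℝ) • (A + Aᵀ) + Aᵀ * M * P + P * M * A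
        + (δM ^ 2) • (Aᵀ * M * Q * M * A) - (4 : ℝ) • Q
    let Ξ21 : Matrix (Fin n) (Fin n) ℝ :=
      Adᵀ * M * P + (1/2 : ℝ) • Adᵀ + (δM ^ 2) • (Adᵀ * M * Q * M * A) - (2 : ℝ) • Q
    let Ξ22 : Matrix (Fin n) (Fin n) ℝ :=
      (δM ^ 2) • (Adᵀ * M * Q * M * Ad) - (4 : ℝ) • Q + σ • (Gᵀ * Ω * G)
    let Ξ31 : Matrix (Fin n) (Fin n) ℝ := (6 : ℝ) • Q
    let Ξ32 : Matrix (Fin n) (Fin n) ℝ := (6 : ℝ) • Q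
    let Ξ33 : Matrix (Fin n) (Fin n) ℝ := (-12 : ℝ) • Q
    let Ξ41 : Matrix (Fin m) (Fin n) ℝ :=
      Aeᵀ * M * P + (1/2 : ℝ) • Aeᵀ + (δM ^ 2) • (Aeᵀ * M * Q * M * A)
    let Ξ42 : Matrix (Fin m) (Fin n) ℝ := (δM ^ 2) • (Aeᵀ * M * Q * M * Ad)
    let Ξ43 : Matrix (Fin m) (Fin n) ℝ := 0
    let Ξ44 : Matrix (Fin m) (Fin m) ℝ := (δM ^ 2) • (Aeᵀ * M * Q * M * Ae) - Ω
    let Ξl : Matrix ((Fin n ⊕ Fin n) ⊕ (Fin n ⊕ Fin m))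
        ((Fin n ⊕ Fin n) ⊕ (Fin n ⊕ Fin m)) ℝ :=
      Matrix.fromBlocks
        (Matrix.fromBlocks Ξ11 Ξ21ᵀ Ξ21 Ξ22)
        (Matrix.fromBlocks Ξ31ᵀ Ξ41ᵀ Ξ32ᵀ Ξ42ᵀ)
        (Matrix.fromBlocks Ξ31 Ξ32 Ξ41 Ξ42)
        (Matrix.fromBlocks Ξ33 Ξ43ᵀ Ξ43 Ξ44)
    DifferentiableAt ℝ V t ∧ deriv V t ≤ ψ ⬝ᵥ (Ξl *ᵥ ψ) := by
  intro V ψ Ξ11 Ξ21 Ξ22 Ξ31 Ξ32 Ξ33 Ξ41 Ξ42 Ξ43 Ξ44 Ξl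
  set d := A *ᵥ (M *ᵥ ξ t) + Ad *ᵥ (M *ᵥ ξ (t - δ)) + Ae *ᵥ e (t - δ) with hd
  have hξ' : Continuous (deriv ξ) := hξ.continuous_deriv le_rfl
  have hξd : ∀ u, HasDerivAt ξ (deriv ξ u) u := fun u =>
    (hξ.differentiable one_ne_zero u).hasDerivAt
  have hx : ∀ u, HasDerivAt (fun s => M *ᵥ ξ s) (M *ᵥ deriv ξ u) u := fun u =>
    LK.hasDerivAt_mulVec M (hξd u)
  have hx' : Continuous fun u => M *ᵥ deriv ξ u := continuous_const.matrix_mulVec hξ'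
  set f : ℝ → ℝ := fun u => (M *ᵥ deriv ξ u) ⬝ᵥ (Q *ᵥ (M *ᵥ deriv ξ u)) with hf
  have hfc : Continuous f := hx'.dotProduct (continuous_const.matrix_mulVec hx')
  have hxt := LK.hasDerivAt_mulVec M hdyn
  have hV : HasDerivAt V _ t :=
    (((LK.hasDerivAt_dot hdyn hxt).const_mul (1/2 : ℝ)).add
      (LK.hasDerivAt_dot hxt (LK.hasDerivAt_mulVec P hxt))).add
      ((LK.hasDerivAt_double_integral hfc δM t).const_mul δM)
  refine ⟨hV.differentiableAt, ?_⟩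
  rw [hV.deriv]
  have hW := LK.wirtinger hQsymm hQ hx hx' hδ rfl rfl rfl (t := t)
  have hQF := LK.quadForm_eq hMsymm hP hQsymm A Ad Ae G Ω σ δM (M *ᵥ ξ t) (M *ᵥ ξ (t - δ))
    ((1 / δ) • ∫ s in (t - δ)..t, M *ᵥ ξ s) d (e (t - δ)) hd
  refine le_of_le_of_eq ?_ hQF.symm
  -- Shortening the window from `δM` to `δ` only decreases the weighted integral, since `f ≥ 0`.
  have hfn : ∀ u, 0 ≤ f u := fun u => LK.quad_nonneg hQ _
  have hmono : ∫ u in (t - δ)..t, f u ≤ ∫ u in (t - δM)..t, f u :=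
    integral_mono_interval (by linarith) (by linarith) le_rfl
      (Filter.Eventually.of_forall hfn) (hfc.intervalIntegrable _ _)
  have hI0 : 0 ≤ ∫ u in (t - δ)..t, f u := integral_nonneg (by linarith) fun u _ => hfn u
  have hint : δ * ∫ u in (t - δ)..t, f u ≤ δM * ∫ u in (t - δM)..t, f u :=
    mul_le_mul hδδM hmono hI0 hδM.le
  have hft : f t = (M *ᵥ d) ⬝ᵥ (Q *ᵥ (M *ᵥ d)) := by simp only [hf, hdyn.deriv]
  have s1 : ξ t ⬝ᵥ (M *ᵥ d) = (M *ᵥ ξ t) ⬝ᵥ d := by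
    rw [LK.dot_symm hMsymm, dotProduct_comm]
  have s2 : d ⬝ᵥ (M *ᵥ ξ t) = (M *ᵥ ξ t) ⬝ᵥ d := dotProduct_comm _ _
  have s3 := LK.dot_symm hP (M *ᵥ ξ t) (M *ᵥ d)
  rw [s1, s2, s3, hft]
  linarith [hW, hint, hetm]
end
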